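/- arXiv:2008.06200 — 2 statements merged into one kernel-verified Lean document; each statement's English description precedes it below -/
import Mathlib

section
/- For every real s > 1 and every real r > 1, the function f(p) = (r-1)/(ζ(s)Γ(s)(1-p)^r) · ∫_p^1 (ω-p)^(r-2) (-ln ω)^(s-1) / ω^(r-1) dω is nonnegative on (0,1) and satisfies ∫₀¹ f(p) dp = 1; i.e., it is a genuine probability density function on (0,1). -/
open MeasureTheory

/-- The Riemann zeta function for real `s > 1`, defined as `∑_{x=0}^∞ (x+1)^(-s)`. -/
noncomputable def zetaS (s : ℝ) : ℝ := ∑' x : ℕ, ((x : ℝ) + 1) ^ (-s)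


lemma aux_zeta_hasSum (s : ℝ) (hs : 1 < s) :
    Summable (fun x : ℕ => ((x : ℝ) + 1) ^ (-s)) := by
  have h := (Real.summable_one_div_nat_add_rpow 1 s).2 hs
  refine h.congr (fun n => ?_)
  have : (0:ℝ) ≤ (n:ℝ) + 1 := by positivity
  rw [abs_of_nonneg this, Real.rpow_neg this, one_div]

lemma aux_zeta_pos (s : ℝ) (hs : 1 < s) : 0 < zetaS s := by
  unfold zetaS
  exact (aux_zeta_hasSum s hs).tsum_pos (fun n => by positivity) 0 (by simp)

lemma aux_gamma_zeta (s : ℝ) (hs : 1 < s) :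
    ∫ t in Set.Ioi (0:ℝ), t ^ (s - 1) * Real.exp (-t) / (1 - Real.exp (-t))
      = zetaS s * Real.Gamma s := by
  have hG : 0 < Real.Gamma s := Real.Gamma_pos_of_pos (by linarith)
  have hval : ∀ n : ℕ, ∫ t in Set.Ioi (0:ℝ), t ^ (s - 1) * Real.exp (-(((n:ℝ) + 1) * t))
      = ((n:ℝ) + 1) ^ (-s) * Real.Gamma s := by
    intro n
    have hn : (0:ℝ) < (n:ℝ) + 1 := by positivity
    rw [Real.integral_rpow_mul_exp_neg_mul_Ioi (by linarith) hn, one_div,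
      Real.inv_rpow hn.le, Real.rpow_neg hn.le]
  have hint : ∀ n : ℕ, Integrable (fun t : ℝ => t ^ (s - 1) * Real.exp (-(((n:ℝ) + 1) * t)))
      (volume.restrict (Set.Ioi (0:ℝ))) := by
    intro n
    refine Integrable.of_integral_ne_zero ?_
    rw [hval n]; positivity
  have hsum : Summable (fun n : ℕ => ∫ t in Set.Ioi (0:ℝ),
      ‖t ^ (s - 1) * Real.exp (-(((n:ℝ) + 1) * t))‖) := by
    refine ((aux_zeta_hasSum s hs).mul_right (Real.Gamma s)).congr (fun n => ?_)
    rw [← hval n]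
    refine setIntegral_congr_fun measurableSet_Ioi (fun t ht => ?_)
    have ht : (0:ℝ) < t := ht
    exact (Real.norm_of_nonneg (by positivity)).symm
  have key := (hasSum_integral_of_summable_integral_norm hint hsum).tsum_eq
  simp_rw [hval] at key
  rw [tsum_mul_right] at key
  rw [zetaS, key]
  refine setIntegral_congr_fun measurableSet_Ioi (fun t ht => ?_)
  have ht : (0:ℝ) < t := ht
  have h1 : Real.exp (-t) < 1 := by simpa using ht
  have h2 : ∀ n : ℕ, t ^ (s - 1) * Real.exp (-(((n:ℝ) + 1) * t))
      = (t ^ (s - 1) * Real.exp (-t)) * (Real.exp (-t)) ^ n := by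
    intro n
    rw [← Real.exp_nat_mul, mul_assoc, ← Real.exp_add]
    congr 2; ring
  simp only [h2]
  rw [tsum_mul_left, tsum_geometric_of_lt_one (Real.exp_pos _).le h1, div_eq_mul_inv]

lemma aux_log (s : ℝ) (hs : 1 < s) :
    ∫ w in Set.Ioo (0:ℝ) 1, (-Real.log w) ^ (s - 1) / (1 - w) = zetaS s * Real.Gamma s := by
  have himg : (fun t : ℝ => Real.exp (-t)) '' Set.Ioi 0 = Set.Ioo 0 1 := by
    ext w
    constructor
    · rintro ⟨t, ht, rfl⟩
      have ht : (0:ℝ) < t := ht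
      exact ⟨Real.exp_pos _, by simpa using ht⟩
    · rintro ⟨h0, h1⟩
      refine ⟨-Real.log w, ?_, ?_⟩
      · have := Real.log_neg h0 h1
        simpa using this
      · simp [Real.exp_log h0]
  rw [← himg, integral_image_eq_integral_abs_deriv_smul (f' := fun t => -Real.exp (-t))
    measurableSet_Ioi, ← aux_gamma_zeta s hs]
  · refine setIntegral_congr_fun measurableSet_Ioi (fun t ht => ?_)
    simp only [abs_neg, Real.abs_exp, Real.log_exp, neg_neg, smul_eq_mul]
    ring
  · intro t ht
    have := ((hasDerivAt_id t).neg).exp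
    simpa using this.hasDerivWithinAt
  · intro a _ b _ h
    have := Real.exp_injective h
    linarith

lemma aux_inner (r : ℝ) (hr : 1 < r) (w : ℝ) (h0 : 0 < w) (h1 : w < 1) :
    IntegrableOn (fun p : ℝ => (w - p) ^ (r - 2) / (1 - p) ^ r) (Set.Ioo 0 w) ∧
    ∫ p in Set.Ioo 0 w, (w - p) ^ (r - 2) / (1 - p) ^ r = w ^ (r - 1) / ((r - 1) * (1 - w)) := by
  set G : ℝ → ℝ := fun p => -(((w - p) / (1 - p)) ^ (r - 1) / ((r - 1) * (1 - w))) with hG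
  have hr1 : r - 1 ≠ 0 := by linarith
  have hw1 : 1 - w ≠ 0 := by linarith
  have hcont : ContinuousOn G (Set.Icc 0 w) := by
    refine ContinuousOn.neg (ContinuousOn.div_const (ContinuousOn.rpow_const ?_ ?_) _)
    · refine ContinuousOn.div (by fun_prop) (by fun_prop) ?_
      intro x hx
      have := hx.2
      intro h; linarith
    · intro x _; right; linarith
  have hder : ∀ p ∈ Set.Ioo 0 w, HasDerivAt G ((w - p) ^ (r - 2) / (1 - p) ^ r) p := by
    intro p hp
    have hwp : 0 < w - p := by linarith [hp.2]
    have h1p : 0 < 1 - p := by linarith [hp.2]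
    have hu : HasDerivAt (fun p : ℝ => (w - p) / (1 - p))
        (((-1) * (1 - p) - (w - p) * (-1)) / (1 - p) ^ 2) p :=
      ((hasDerivAt_id p).const_sub w).div ((hasDerivAt_id p).const_sub 1) h1p.ne'
    have h := (((hu.rpow_const (p := r - 1) (Or.inl (div_pos hwp h1p).ne')).div_const
      ((r - 1) * (1 - w))).neg)
    refine h.congr_deriv ?_
    have e1 : r - 1 - 1 = r - 2 := by ring
    have e2 : (1 - p) ^ r = (1 - p) ^ (r - 2) * (1 - p) ^ 2 := by
      rw [← Real.rpow_natCast, ← Real.rpow_add h1p]; congr 1; push_cast; ring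
    rw [e1, Real.div_rpow hwp.le h1p.le, e2]
    have := Real.rpow_pos_of_pos h1p (r - 2)
    field_simp
    ring
  have hI : IntegrableOn (fun p : ℝ => (w - p) ^ (r - 2) / (1 - p) ^ r) (Set.Ioc 0 w) := by
    refine intervalIntegral.integrableOn_deriv_of_nonneg hcont hder ?_
    intro p hp
    have hwp : 0 < w - p := by linarith [hp.2]
    have h1p : 0 < 1 - p := by linarith [hp.2]
    positivity
  refine ⟨hI.mono_set Set.Ioo_subset_Ioc_self, ?_⟩
  rw [← integral_Ioc_eq_integral_Ioo, ← intervalIntegral.integral_of_le h0.le,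
    intervalIntegral.integral_eq_sub_of_hasDerivAt_of_le h0.le hcont hder
      ((intervalIntegrable_iff_integrableOn_Ioc_of_le h0.le).2 hI)]
  simp [hG, Real.zero_rpow hr1]



/-- For `s > 1` and `r > 1`, the mixing density
`f(p) = (r-1)/(ζ(s)Γ(s)(1-p)^r) ∫_p^1 (ω-p)^(r-2)(-ln ω)^(s-1)/ω^(r-1) dω`
is a genuine probability density on `(0,1)`. -/
theorem negBinomial_mixing_density_is_pdf (s : ℝ) (hs : 1 < s) (r : ℝ) (hr : 1 < r) :
    (∀ p ∈ Set.Ioo (0 : ℝ) 1,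
        0 ≤ (r - 1) / (zetaS s * Real.Gamma s * (1 - p) ^ r) *
          ∫ ω in Set.Ioo p 1,
            (ω - p) ^ (r - 2) * (-Real.log ω) ^ (s - 1) / ω ^ (r - 1)) ∧
    ∫ p in Set.Ioo (0 : ℝ) 1,
        (r - 1) / (zetaS s * Real.Gamma s * (1 - p) ^ r) *
          ∫ ω in Set.Ioo p 1,
            (ω - p) ^ (r - 2) * (-Real.log ω) ^ (s - 1) / ω ^ (r - 1)
      = 1 := by
  have hG : 0 < Real.Gamma s := Real.Gamma_pos_of_pos (by linarith)
  have hZ := aux_zeta_pos s hs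
  have hr1 : 0 < r - 1 := by linarith
  constructor
  · intro p hp
    have h1p : 0 < 1 - p := by linarith [hp.2]
    refine mul_nonneg (by positivity) (setIntegral_nonneg measurableSet_Ioo ?_)
    intro w hw
    have hw0 : 0 < w := hp.1.trans hw.1
    have hwp : 0 < w - p := by linarith [hw.1]
    have hl : 0 < -Real.log w := by linarith [Real.log_neg hw0 hw.2]
    positivity
  set K : ℝ → ℝ → ℝ := fun p w =>
    (Set.Iio w).indicator (fun p => (w - p) ^ (r - 2) / (1 - p) ^ r) p *
      ((-Real.log w) ^ (s - 1) / w ^ (r - 1)) with hK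
  set μ : Measure ℝ := volume.restrict (Set.Ioo (0:ℝ) 1) with hμ
  have hset : ∀ w ∈ Set.Ioo (0:ℝ) 1, Set.Ioo (0:ℝ) 1 ∩ Set.Iio w = Set.Ioo 0 w := by
    intro w hw
    ext x
    simp only [Set.mem_inter_iff, Set.mem_Ioo, Set.mem_Iio]
    constructor
    · rintro ⟨⟨a, _⟩, b⟩; exact ⟨a, b⟩
    · rintro ⟨a, b⟩; exact ⟨⟨a, b.trans hw.2⟩, b⟩
  have hKint : ∀ w ∈ Set.Ioo (0:ℝ) 1, Integrable (fun p => K p w) μ := by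
    intro w hw
    refine Integrable.mul_const ?_ _
    rw [integrable_indicator_iff measurableSet_Iio, IntegrableOn, hμ,
      Measure.restrict_restrict measurableSet_Iio, Set.inter_comm, hset w hw]
    exact (aux_inner r hr w hw.1 hw.2).1
  have hKval : ∀ w ∈ Set.Ioo (0:ℝ) 1, ∫ p, K p w ∂μ =
      (r - 1)⁻¹ * ((-Real.log w) ^ (s - 1) / (1 - w)) := by
    intro w hw
    simp only [hK]
    rw [integral_mul_const, hμ, setIntegral_indicator measurableSet_Iio, hset w hw,
      (aux_inner r hr w hw.1 hw.2).2]
    have h1 := Real.rpow_pos_of_pos hw.1 (r - 1)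
    have h2 : 1 - w ≠ 0 := by linarith [hw.2]
    field_simp
  have hKnn : ∀ w ∈ Set.Ioo (0:ℝ) 1, ∀ p ∈ Set.Ioo (0:ℝ) 1, 0 ≤ K p w := by
    intro w hw p hp
    have hl : 0 < -Real.log w := by linarith [Real.log_neg hw.1 hw.2]
    have hw0 := hw.1
    refine mul_nonneg (Set.indicator_apply_nonneg ?_) (by positivity)
    intro hpw
    have hwp : 0 < w - p := by linarith [Set.mem_Iio.1 hpw]
    have h1p : 0 < 1 - p := by linarith [hp.2]
    positivity
  have hmem : ∀ᵐ w ∂μ, w ∈ Set.Ioo (0:ℝ) 1 := ae_restrict_mem measurableSet_Ioo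
  have hlogint : Integrable (fun w => (-Real.log w) ^ (s - 1) / (1 - w)) μ := by
    refine Integrable.of_integral_ne_zero ?_
    rw [hμ, aux_log s hs]; positivity
  have hmeas : Measurable (Function.uncurry K) := by
    have : Function.uncurry K = fun x : ℝ × ℝ =>
      (if x.1 < x.2 then (x.2 - x.1) ^ (r - 2) / (1 - x.1) ^ r else 0) *
      ((-Real.log x.2) ^ (s - 1) / x.2 ^ (r - 1)) := by
      ext x
      simp [hK, Function.uncurry, Set.indicator_apply]
    rw [this]
    refine Measurable.mul (Measurable.ite (measurableSet_lt measurable_fst measurable_snd)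
      (by fun_prop) measurable_const) (by fun_prop)
  have hprod : Integrable (Function.uncurry K) (μ.prod μ) := by
    rw [integrable_prod_iff' hmeas.aestronglyMeasurable]
    refine ⟨hmem.mono fun w hw => hKint w hw, ?_⟩
    refine (hlogint.const_mul (r - 1)⁻¹).congr ?_
    filter_upwards [hmem] with w hw
    rw [← hKval w hw]
    refine integral_congr_ae ?_
    filter_upwards [hmem] with p hp
    exact (Real.norm_of_nonneg (hKnn w hw p hp)).symm
  have hswap := integral_integral_swap hprod
  have hR : ∫ w, ∫ p, K p w ∂μ ∂μ = (r - 1)⁻¹ * (zetaS s * Real.Gamma s) := by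
    rw [← aux_log s hs, ← integral_const_mul]
    exact integral_congr_ae (hmem.mono fun w hw => hKval w hw)
  rw [hR] at hswap
  have hfin : ∫ p, (r - 1) / (zetaS s * Real.Gamma s) * ∫ w, K p w ∂μ ∂μ = 1 := by
    rw [integral_const_mul, hswap]
    field_simp
  refine Eq.trans ?_ hfin
  refine setIntegral_congr_fun measurableSet_Ioo (fun p hp => ?_)
  have h1p : 0 < 1 - p := by linarith [hp.2]
  have hin : ∫ w, K p w ∂μ = ((1 - p) ^ r)⁻¹ * ∫ ω in Set.Ioo p 1,
            (ω - p) ^ (r - 2) * (-Real.log ω) ^ (s - 1) / ω ^ (r - 1) := by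
    have hs2 : Set.Ioo (0:ℝ) 1 ∩ Set.Ioi p = Set.Ioo p 1 := by
      ext x
      simp only [Set.mem_inter_iff, Set.mem_Ioo, Set.mem_Ioi]
      constructor
      · rintro ⟨⟨_, a⟩, b⟩; exact ⟨b, a⟩
      · rintro ⟨a, b⟩; exact ⟨⟨hp.1.trans a, b⟩, a⟩
    rw [← integral_const_mul, ← hs2, ← setIntegral_indicator measurableSet_Ioi]
    refine integral_congr_ae (Filter.Eventually.of_forall fun w => ?_)
    simp only [hK, Set.indicator_apply, Set.mem_Iio, Set.mem_Ioi]
    split_ifs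
    · ring
    · simp
  rw [hin]
  have := Real.rpow_pos_of_pos h1p r
  field_simp
end

section
/- For every real s > 1 and every natural number x, the moments of the Geometric mixing distribution satisfy the recursion ∫₀¹ p^{x+1} f(p) dp = ∫₀¹ p^x f(p) dp − (x+1)^(-s)/ζ(s), where f(p) = (-ln p)^(s-1)/(ζ(s)Γ(s)(1-p)); equivalently, E[p^{x+1}] = E[p^x] − (x+1)^(-s)/ζ(s) and E[p^0] = 1. -/
open MeasureTheory

lemma aux_image : (fun t : ℝ => Real.exp (-t)) '' Set.Ioi 0 = Set.Ioo (0 : ℝ) 1 := by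
  ext p
  constructor
  · rintro ⟨t, ht, rfl⟩
    exact ⟨Real.exp_pos _, by simpa using ht⟩
  · rintro ⟨h0, h1⟩
    exact ⟨-Real.log p, by simpa using Real.log_neg h0 h1, by simp [Real.exp_log h0]⟩

lemma aux_int (s : ℝ) (hs : 1 < s) (n : ℕ) :
    ∫ p in Set.Ioo (0 : ℝ) 1, p ^ n * (-Real.log p) ^ (s - 1)
      = ((n : ℝ) + 1) ^ (-s) * Real.Gamma s := by
  have hn : (0 : ℝ) < (n : ℝ) + 1 := by positivity
  rw [← aux_image, integral_image_eq_integral_abs_deriv_smul (f' := fun t => -Real.exp (-t))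
    measurableSet_Ioi]
  · have h := Real.integral_rpow_mul_exp_neg_mul_Ioi (a := s) (r := (n : ℝ) + 1) (by linarith) hn
    rw [Real.rpow_neg hn.le, ← Real.inv_rpow hn.le, ← one_div, ← h]
    refine setIntegral_congr_fun measurableSet_Ioi fun t _ => ?_
    simp only [abs_neg, abs_of_pos (Real.exp_pos _), Real.log_exp, neg_neg, smul_eq_mul]
    rw [← Real.exp_nat_mul, ← mul_assoc, ← Real.exp_add, mul_comm]
    congr 2
    ring
  · intro t _
    have := ((hasDerivAt_id t).neg.exp).hasDerivWithinAt (s := Set.Ioi 0)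
    simpa using this
  · intro a _ b _ h
    simpa using h

lemma aux_summable (s : ℝ) (hs : 1 < s) : Summable (fun n : ℕ => ((n : ℝ) + 1) ^ (-s)) := by
  have := (summable_nat_add_iff 1).2 (Real.summable_nat_rpow.2 (show -s < -1 by linarith))
  simpa using this

lemma aux_moment (s : ℝ) (hs : 1 < s) (x : ℕ) :
    ∫ p in Set.Ioo (0 : ℝ) 1,
        p ^ x * ((-Real.log p) ^ (s - 1) / (zetaS s * Real.Gamma s * (1 - p)))
      = (∑' n : ℕ, (((n + x : ℕ) : ℝ) + 1) ^ (-s)) / zetaS s := by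
  have hG : 0 < Real.Gamma s := Real.Gamma_pos_of_pos (by linarith)
  have hsum := (summable_nat_add_iff x).2 (aux_summable s hs)
  have key := hasSum_integral_of_summable_integral_norm
    (μ := volume.restrict (Set.Ioo (0 : ℝ) 1))
    (F := fun (n : ℕ) (p : ℝ) => p ^ (n + x) * (-Real.log p) ^ (s - 1))
    (fun n => by
      by_contra hc
      have h := integral_undef hc
      rw [aux_int s hs] at h
      have : 0 < (((n + x : ℕ) : ℝ) + 1) ^ (-s) * Real.Gamma s := by positivity
      linarith)
    (by
      refine (hsum.mul_right (Real.Gamma s)).congr fun n => ?_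
      rw [← aux_int s hs]
      refine setIntegral_congr_fun measurableSet_Ioo fun p hp => ?_
      have := Real.log_neg hp.1 hp.2
      have h1 := hp.1
      refine (Real.norm_of_nonneg ?_).symm
      exact mul_nonneg (by positivity) (Real.rpow_nonneg (by linarith) _))
  simp only [aux_int s hs] at key
  have key2 := key.tsum_eq
  rw [tsum_mul_right] at key2
  have h3 : ∫ p in Set.Ioo (0 : ℝ) 1,
        p ^ x * ((-Real.log p) ^ (s - 1) / (zetaS s * Real.Gamma s * (1 - p)))
      = ∫ p in Set.Ioo (0 : ℝ) 1, (zetaS s * Real.Gamma s)⁻¹ *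
        ∑' n : ℕ, p ^ (n + x) * (-Real.log p) ^ (s - 1) := by
    refine setIntegral_congr_fun measurableSet_Ioo fun p hp => ?_
    simp only [pow_add, tsum_mul_right, tsum_geometric_of_lt_one hp.1.le hp.2]
    simp only [div_eq_mul_inv, mul_inv]
    ring
  rw [h3, integral_const_mul, ← key2]
  field_simp

/-- The moments of the Geometric mixing density
`f(p) = (-ln p)^(s-1)/(ζ(s)Γ(s)(1-p))` satisfy the recursion
`E[p^{x+1}] = E[p^x] - (x+1)^(-s)/ζ(s)`, with `E[p^0] = 1`. -/
theorem geometric_mixing_density_moment_recursion (s : ℝ) (hs : 1 < s) (x : ℕ) :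
    (∫ p in Set.Ioo (0 : ℝ) 1,
        p ^ (x + 1) * ((-Real.log p) ^ (s - 1) / (zetaS s * Real.Gamma s * (1 - p)))
      = (∫ p in Set.Ioo (0 : ℝ) 1,
          p ^ x * ((-Real.log p) ^ (s - 1) / (zetaS s * Real.Gamma s * (1 - p))))
        - ((x : ℝ) + 1) ^ (-s) / zetaS s) ∧
    ∫ p in Set.Ioo (0 : ℝ) 1,
        p ^ (0 : ℕ) * ((-Real.log p) ^ (s - 1) / (zetaS s * Real.Gamma s * (1 - p)))
      = 1 := by
  have hz : 0 < zetaS s :=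
    (aux_summable s hs).tsum_pos (fun n => by positivity) 0 (by simp)
  refine ⟨?_, ?_⟩
  · rw [aux_moment s hs, aux_moment s hs,
      ((summable_nat_add_iff x).2 (aux_summable s hs)).tsum_eq_zero_add, ← sub_div]
    congr 1
    simp only [zero_add, add_sub_cancel_left]
    refine tsum_congr fun n => ?_
    congr 2
    push_cast
    ring
  · rw [aux_moment s hs]
    exact div_self hz.ne'
end
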